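/- Fix a joint leader action a and suppose the follower's UCB-E subroutine for a is run with parameter e satisfying 0 < e ≤ (25/36)(T_a − n_f)/H_a, where T_a is the number of rounds in which a is played during the exploration phase and H_a = ∑_{k=1}^{n_f} 1/Δ_{ak}². Then the probability that the resulting best response predictor is wrong satisfies P(B̂r(a) ≠ Br(a)) ≤ 2 T_a n_f exp(−2e/25). In particular, for e = (25/36)(T_a − n_f)/H_a, P(B̂r(a) ≠ Br(a)) ≤ 2 T_a n_f exp(−(T_a − n_f)/(18 H_a)). -/

import Mathlib

open MeasureTheory Finset
open scoped Classical

noncomputable section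

/-- An (arbitrary, via choice) index attaining the minimum of `f` over `Fin k`. -/
def argminF {k : ℕ} [NeZero k] (f : Fin k → ℝ) : Fin k :=
  Classical.choose (Finset.exists_min_image Finset.univ f ⟨0, Finset.mem_univ 0⟩)

/-- Number of pulls of arm `k` recorded in the history `h`. -/
def cntK {nf : ℕ} (h : List (Fin nf × ℝ)) (k : Fin nf) : ℕ :=
  (h.filter fun x => x.1 = k).length

/-- Empirical mean loss of arm `k` in the history `h`. -/
def muHat {nf : ℕ} (h : List (Fin nf × ℝ)) (k : Fin nf) : ℝ :=
  (((h.filter fun x => x.1 = k).map fun x => x.2).sum) / cntK h k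

/-- The UCB-E choice with exploration parameter `e`: pull an unpulled arm first, otherwise pick
the arm minimizing the index `μ̂_k − √(e / T_k)`. -/
def ucbEChoice {nf : ℕ} [NeZero nf] (e : ℝ) (h : List (Fin nf × ℝ)) : Fin nf :=
  let unpulled := Finset.univ.filter fun k : Fin nf => cntK h k = 0
  if hu : unpulled.Nonempty then unpulled.min' hu
  else argminF fun k => muHat h k - Real.sqrt (e / cntK h k)

/-- Extension of a finite trajectory to `ℕ` (junk value after time `N`). -/
def eOf {E : Type} [Inhabited E] (N : ℕ) (ω : Fin N → E) (t : ℕ) : E :=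
  if h : t < N then ω ⟨t, h⟩ else default

/-- History of the UCB-E process after `t` pulls along the noise trajectory `e'`. -/
def ucbEState {nf : ℕ} [NeZero nf] (e : ℝ) (e' : ℕ → Fin nf → ℝ) : ℕ → List (Fin nf × ℝ)
  | 0 => []
  | t + 1 =>
    let h := ucbEState e e' t
    let k := ucbEChoice e h
    (k, e' t k) :: h

/-- The best response (best arm) predictor after `Ta` pulls of UCB-E: the arm with the smallest
empirical mean loss. -/
def brHatE {nf : ℕ} [NeZero nf] (e : ℝ) (e' : ℕ → Fin nf → ℝ) (Ta : ℕ) : Fin nf :=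
  argminF fun k => muHat (ucbEState e e' Ta) k

/-!
Consider the event that all empirical means stay within a fifth of their exploration bonus of the
true means. At the last pull of a suboptimal arm with gap `Δ` its index beat that of the best arm,
which bounds its number of pulls by `1 + (36 / 25) e / (Δ + (4 / 5) q) ^ 2`, where `q` is the final
bonus of the best arm. Since the pulls add up to `T`, the budget condition on `e` forces the best
arm to be pulled so often that `q < (11 / 10) Δ` for every suboptimal gap `Δ`; comparing indices at
the last pull of the best arm then bounds the final bonus of every other arm, and the confidence
intervals separate. The event fails with small probability: the centred losses of one arm, stopped
after `s` pulls, define an exponential supermartingale, and Markov's inequality is summed over arms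
and values of `s`.
-/

open ProbabilityTheory NNReal

section Argmin

variable {k : ℕ} [NeZero k]

theorem apply_argminF_le (f : Fin k → ℝ) (j : Fin k) : f (argminF f) ≤ f j :=
  (Classical.choose_spec
    (Finset.exists_min_image Finset.univ f ⟨0, Finset.mem_univ 0⟩)).2 j (Finset.mem_univ j)

theorem argminF_congr {f g : Fin k → ℝ} (h : ∀ i j, f i ≤ f j ↔ g i ≤ g j) :
    argminF f = argminF g := by
  simp only [argminF, h]

-- The minimizer depends only on the finitely many truth values of `f i ≤ f j`.
theorem measurable_argminF : Measurable (argminF : (Fin k → ℝ) → Fin k) := by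
  let comparisons : (Fin k → ℝ) → Fin k × Fin k → Prop := fun f p => f p.1 ≤ f p.2
  have h_meas : Measurable comparisons := measurable_pi_iff.2 fun p =>
    measurableSet_setOfPred.1 (measurableSet_le (measurable_pi_apply _) (measurable_pi_apply _))
  have h_factors : Function.FactorsThrough (argminF : (Fin k → ℝ) → Fin k) comparisons :=
    fun f g h => argminF_congr fun i j => iff_of_eq (congrFun h (i, j))
  rw [← h_factors.extend_comp fun _ => 0]
  exact (measurable_of_finite _).comp h_meas

end Argmin

section History

variable {nf : ℕ}

/-- Total loss of arm `k` recorded in the list `h`, the numerator of `muHat h k`. -/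
def lossSum (h : List (Fin nf × ℝ)) (k : Fin nf) : ℝ :=
  ((h.filter fun x => x.1 = k).map fun x => x.2).sum

theorem muHat_eq_lossSum_div (h : List (Fin nf × ℝ)) (k : Fin nf) :
    muHat h k = lossSum h k / cntK h k := rfl

theorem cntK_cons (h : List (Fin nf × ℝ)) (a : Fin nf) (x : ℝ) (k : Fin nf) :
    cntK ((a, x) :: h) k = cntK h k + if a = k then 1 else 0 := by
  by_cases hak : a = k <;> simp [cntK, hak]

theorem lossSum_cons (h : List (Fin nf × ℝ)) (a : Fin nf) (x : ℝ) (k : Fin nf) :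
    lossSum ((a, x) :: h) k = lossSum h k + if a = k then x else 0 := by
  by_cases hak : a = k <;> simp [lossSum, hak, add_comm]

/-- History after `t` pulls of the bandit policy `π`, most recent pull first, when pulling arm `k`
at time `i` costs `X i k`. -/
def history (π : List (Fin nf × ℝ) → Fin nf) (X : ℕ → Fin nf → ℝ) : ℕ → List (Fin nf × ℝ)
  | 0 => []
  | t + 1 => (π (history π X t), X t (π (history π X t))) :: history π X t

theorem ucbEState_eq_history [NeZero nf] (e : ℝ) (X : ℕ → Fin nf → ℝ) (t : ℕ) :
    ucbEState e X t = history (ucbEChoice e) X t := by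
  induction t with
  | zero => rfl
  | succ t ih => simp only [ucbEState, history, ih]

variable (π : List (Fin nf × ℝ) → Fin nf) (X : ℕ → Fin nf → ℝ)

theorem cntK_history_zero (k : Fin nf) : cntK (history π X 0) k = 0 := rfl

theorem cntK_history_succ (t : ℕ) (k : Fin nf) :
    cntK (history π X (t + 1)) k =
      cntK (history π X t) k + if π (history π X t) = k then 1 else 0 :=
  cntK_cons _ _ _ _

theorem lossSum_history_zero (k : Fin nf) : lossSum (history π X 0) k = 0 := rfl

theorem lossSum_history_succ (t : ℕ) (k : Fin nf) :
    lossSum (history π X (t + 1)) k =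
      lossSum (history π X t) k + if π (history π X t) = k then X t k else 0 := by
  rw [history, lossSum_cons]
  split_ifs with h
  · rw [h]
  · rfl

theorem monotone_cntK_history (k : Fin nf) : Monotone fun t => cntK (history π X t) k :=
  monotone_nat_of_le_succ fun t => by simp only [cntK_history_succ, Nat.le_add_right]

theorem sum_cntK_history (t : ℕ) : ∑ k, cntK (history π X t) k = t := by
  induction t with
  | zero => simp [cntK_history_zero]
  | succ t ih => simp [cntK_history_succ, Finset.sum_add_distrib, ih]

theorem cntK_history_le (t : ℕ) (k : Fin nf) : cntK (history π X t) k ≤ t :=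
  (Finset.single_le_sum_of_canonicallyOrdered (Finset.mem_univ k)).trans_eq
    (sum_cntK_history π X t)

variable {π X}

theorem exists_last_pull {T : ℕ} {k : Fin nf} (hk : 0 < cntK (history π X T) k) :
    ∃ t < T, cntK (history π X t) k + 1 = cntK (history π X T) k ∧ π (history π X t) = k := by
  induction T with
  | zero => simp [cntK_history_zero] at hk
  | succ T ih =>
    by_cases h : π (history π X T) = k
    · exact ⟨T, T.lt_succ_self, by simp [cntK_history_succ, h], h⟩
    · have h_eq : cntK (history π X (T + 1)) k = cntK (history π X T) k := by
        simp [cntK_history_succ, h]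
      obtain ⟨t, ht, h_cnt, h_pull⟩ := ih (h_eq ▸ hk)
      exact ⟨t, ht.trans T.lt_succ_self, h_cnt.trans h_eq.symm, h_pull⟩

theorem history_congr {Y : ℕ → Fin nf → ℝ} {t : ℕ} (h : ∀ i < t, X i = Y i) :
    history π X t = history π Y t := by
  induction t with
  | zero => rfl
  | succ t ih =>
    simp only [history, ih fun i hi => h i (hi.trans t.lt_succ_self), h t t.lt_succ_self]

/-- The clean event of the analysis: up to time `T`, the empirical mean of every arm already pulled
is within a fifth of its exploration bonus of the true mean `l k`. -/
def EstimatesAccurate (π : List (Fin nf × ℝ) → Fin nf) (X : ℕ → Fin nf → ℝ) (e : ℝ)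
    (l : Fin nf → ℝ) (T : ℕ) : Prop :=
  ∀ t ≤ T, ∀ k, 0 < cntK (history π X t) k →
    |muHat (history π X t) k - l k| < √(e / cntK (history π X t) k) / 5

end History

section UCBE

variable {nf : ℕ} [NeZero nf] {e : ℝ}

theorem cntK_ucbEChoice_of_exists_unpulled {h : List (Fin nf × ℝ)} (hu : ∃ j, cntK h j = 0) :
    cntK h (ucbEChoice e h) = 0 := by
  have hu' : (Finset.univ.filter fun k : Fin nf => cntK h k = 0).Nonempty := by
    simpa [Finset.Nonempty] using hu
  simpa [ucbEChoice, hu'] using Finset.min'_mem _ hu'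

theorem ucbEChoice_of_forall_pulled {h : List (Fin nf × ℝ)} (hp : ∀ j, cntK h j ≠ 0) :
    ucbEChoice e h = argminF fun k => muHat h k - √(e / cntK h k) := by
  simp [ucbEChoice, Finset.Nonempty, hp]

variable {X : ℕ → Fin nf → ℝ} {T : ℕ}

theorem exists_last_ucbE_pull {k : Fin nf} (hk : 2 ≤ cntK (history (ucbEChoice e) X T) k) :
    ∃ t ≤ T, cntK (history (ucbEChoice e) X t) k + 1 = cntK (history (ucbEChoice e) X T) k ∧
      ∀ j, 0 < cntK (history (ucbEChoice e) X t) j ∧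
        muHat (history (ucbEChoice e) X t) k - √(e / cntK (history (ucbEChoice e) X t) k) ≤
          muHat (history (ucbEChoice e) X t) j - √(e / cntK (history (ucbEChoice e) X t) j) := by
  obtain ⟨t, ht, h_cnt, h_pull⟩ := exists_last_pull (two_pos.trans_le hk)
  have h_pulled : ∀ j, cntK (history (ucbEChoice e) X t) j ≠ 0 := by
    intro j hj
    have := h_pull ▸ cntK_ucbEChoice_of_exists_unpulled (e := e) ⟨j, hj⟩
    lia
  refine ⟨t, ht.le, h_cnt, fun j => ⟨Nat.pos_of_ne_zero (h_pulled j), ?_⟩⟩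
  rw [ucbEChoice_of_forall_pulled h_pulled] at h_pull
  simpa only [h_pull] using apply_argminF_le (fun k =>
    muHat (history (ucbEChoice e) X t) k - √(e / cntK (history (ucbEChoice e) X t) k)) j

variable {l : Fin nf → ℝ}

theorem gap_add_bonus_le_of_two_le_cntK (he : 0 ≤ e)
    (hacc : EstimatesAccurate (ucbEChoice e) X e l T) {k : Fin nf}
    (hk : 2 ≤ cntK (history (ucbEChoice e) X T) k) (j : Fin nf) :
    0 < cntK (history (ucbEChoice e) X T) j ∧
      l k - l j + 4 / 5 * √(e / cntK (history (ucbEChoice e) X T) j) ≤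
        6 / 5 * √(e / (cntK (history (ucbEChoice e) X T) k - 1)) := by
  obtain ⟨t, ht, h_cnt, h_last⟩ := exists_last_ucbE_pull hk
  obtain ⟨hj, h_index⟩ := h_last j
  have h_mono := monotone_cntK_history (ucbEChoice e) X j ht
  refine ⟨hj.trans_le h_mono, ?_⟩
  have h_bonus : √(e / cntK (history (ucbEChoice e) X T) j) ≤
      √(e / cntK (history (ucbEChoice e) X t) j) := by
    have : (0 : ℝ) < cntK (history (ucbEChoice e) X t) j := mod_cast hj
    gcongr
  rw [← h_cnt, Nat.cast_add_one, add_sub_cancel_right]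
  have h_acc_k := abs_lt.1 (hacc t ht k (h_last k).1)
  have h_acc_j := abs_lt.1 (hacc t ht j hj)
  linarith

theorem cntK_sub_one_le_of_accurate (he : 0 ≤ e)
    (hacc : EstimatesAccurate (ucbEChoice e) X e l T) {k j : Fin nf} (hkj : l j < l k) :
    (cntK (history (ucbEChoice e) X T) k : ℝ) - 1 ≤
      36 / 25 * e *
        (1 / (l k - l j + 4 / 5 * √(e / cntK (history (ucbEChoice e) X T) j)) ^ 2) := by
  have : 0 < l k - l j := sub_pos.2 hkj
  obtain hk | hk := Nat.lt_or_ge (cntK (history (ucbEChoice e) X T) k) 2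
  · have : (cntK (history (ucbEChoice e) X T) k : ℝ) ≤ 1 := mod_cast Nat.le_of_lt_succ hk
    exact (sub_nonpos.2 this).trans (by positivity)
  · have hm : (0 : ℝ) < cntK (history (ucbEChoice e) X T) k - 1 := by
      rw [sub_pos]
      exact_mod_cast hk
    have h_sq := pow_le_pow_left₀ (by positivity)
      (gap_add_bonus_le_of_two_le_cntK he hacc hk j).2 2
    rw [mul_pow, Real.sq_sqrt (by positivity), ← mul_div_assoc, le_div_iff₀ hm] at h_sq
    rw [mul_one_div, le_div_iff₀ (by positivity)]
    linarith

theorem le_cntK_sub_one_of_accurate (he : 0 ≤ e)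
    (hacc : EstimatesAccurate (ucbEChoice e) X e l T) {br : Fin nf}
    (hbr : ∀ k, k ≠ br → l br < l k)
    (hbudget : 36 / 25 * e * ∑ k, 1 / (l k - l br) ^ 2 ≤ (T : ℝ) - nf)
    {i : Fin nf} (hi : i ≠ br) :
    36 / 25 * e * (1 / (l i - l br) ^ 2 -
        1 / (l i - l br + 4 / 5 * √(e / cntK (history (ucbEChoice e) X T) br)) ^ 2) ≤
      (cntK (history (ucbEChoice e) X T) br : ℝ) - 1 := by
  set c : Fin nf → ℕ := cntK (history (ucbEChoice e) X T)
  set q := √(e / c br)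
  have h_total : ∑ k, ((c k : ℝ) - 1) = T - nf := by
    rw [Finset.sum_sub_distrib, ← Nat.cast_sum, sum_cntK_history]
    simp
  have h_others : ∑ k ∈ Finset.univ.erase br, ((c k : ℝ) - 1) ≤
      36 / 25 * e * ∑ k ∈ Finset.univ.erase br, 1 / (l k - l br + 4 / 5 * q) ^ 2 := by
    rw [Finset.mul_sum]
    exact Finset.sum_le_sum fun k hk =>
      cntK_sub_one_le_of_accurate he hacc (hbr k (Finset.ne_of_mem_erase hk))
  have h_single : 1 / (l i - l br) ^ 2 - 1 / (l i - l br + 4 / 5 * q) ^ 2 ≤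
      ∑ k ∈ Finset.univ.erase br,
        (1 / (l k - l br) ^ 2 - 1 / (l k - l br + 4 / 5 * q) ^ 2) := by
    refine Finset.single_le_sum
      (f := fun k => 1 / (l k - l br) ^ 2 - 1 / (l k - l br + 4 / 5 * q) ^ 2)
      (fun k hk => ?_) (Finset.mem_erase.2 ⟨hi, Finset.mem_univ i⟩)
    have h_gap : 0 < l k - l br := sub_pos.2 (hbr k (Finset.ne_of_mem_erase hk))
    rw [sub_nonneg]
    gcongr
    exact le_add_of_nonneg_right (by positivity)
  have h_scaled := mul_le_mul_of_nonneg_left h_single (show 0 ≤ 36 / 25 * e by positivity)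
  rw [Finset.sum_sub_distrib, mul_sub _ (∑ _ ∈ _, _)] at h_scaled
  rw [← Finset.add_sum_erase _ _ (Finset.mem_univ br)] at h_total hbudget
  -- Here `1 / 0 = 0`: the best arm does not contribute to the hardness.
  rw [sub_self, zero_pow two_ne_zero, div_zero, zero_add] at hbudget
  linarith

theorem lt_of_mul_one_div_sq_sub_lt_one {D q : ℝ} (hD : 0 < D)
    (h : 36 / 25 * q ^ 2 * (1 / D ^ 2 - 1 / (D + 4 / 5 * q) ^ 2) < 1) : q < 11 / 10 * D := by
  by_contra! hq
  have h_far : 1 / (D + 4 / 5 * q) ^ 2 ≤ 1 / (47 / 25 * D) ^ 2 := by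
    gcongr
    linarith
  have h_split : 1 / (47 / 25 * D) ^ 2 = 625 / 2209 * (1 / D ^ 2) := by
    field_simp
    norm_num
  have h_ratio : (11 / 10) ^ 2 ≤ q ^ 2 * (1 / D ^ 2) := by
    rw [mul_one_div, ← div_pow]
    exact pow_le_pow_left₀ (by norm_num) ((le_div_iff₀ hD).2 hq) 2
  have h_mul := mul_le_mul_of_nonneg_left (h_split ▸ h_far) (sq_nonneg q)
  linarith

theorem two_le_cntK_and_bonus_lt_of_accurate (he : 0 < e)
    (hacc : EstimatesAccurate (ucbEChoice e) X e l T) {br : Fin nf}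
    (hbr : ∀ k, k ≠ br → l br < l k)
    (hbudget : 36 / 25 * e * ∑ k, 1 / (l k - l br) ^ 2 ≤ (T : ℝ) - nf)
    {i : Fin nf} (hi : i ≠ br) :
    2 ≤ cntK (history (ucbEChoice e) X T) br ∧
      √(e / cntK (history (ucbEChoice e) X T) br) < 11 / 10 * (l i - l br) := by
  have h_gap : 0 < l i - l br := sub_pos.2 (hbr i hi)
  have h_pulls := le_cntK_sub_one_of_accurate he.le hacc hbr hbudget hi
  set c : Fin nf → ℕ := cntK (history (ucbEChoice e) X T)
  set q := √(e / c br)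
  have hc : (1 : ℝ) ≤ c br := by
    have h_le : 1 / (l i - l br + 4 / 5 * q) ^ 2 ≤ 1 / (l i - l br) ^ 2 := by
      gcongr
      exact le_add_of_nonneg_right (by positivity)
    have := mul_nonneg (show 0 ≤ 36 / 25 * e by positivity) (sub_nonneg.2 h_le)
    linarith
  constructor
  · have : 0 < q := Real.sqrt_pos.2 (by positivity)
    have h_lt : 1 / (l i - l br + 4 / 5 * q) ^ 2 < 1 / (l i - l br) ^ 2 := by
      gcongr
      exact lt_add_of_pos_right _ (by positivity)
    have := mul_pos (show 0 < 36 / 25 * e by positivity) (sub_pos.2 h_lt)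
    have h_one_lt : (1 : ℝ) < c br := by linarith
    exact_mod_cast h_one_lt
  · have he_eq : e = q ^ 2 * c br := by
      rw [Real.sq_sqrt (by positivity), div_mul_cancel₀ e (by positivity)]
    refine lt_of_mul_one_div_sq_sub_lt_one h_gap (lt_of_mul_lt_mul_right ?_ (c br).cast_nonneg)
    calc 36 / 25 * q ^ 2 *
          (1 / (l i - l br) ^ 2 - 1 / (l i - l br + 4 / 5 * q) ^ 2) * (c br : ℝ)
        = 36 / 25 * e * (1 / (l i - l br) ^ 2 - 1 / (l i - l br + 4 / 5 * q) ^ 2) := by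
          linear_combination -(36 / 25) *
            (1 / (l i - l br) ^ 2 - 1 / (l i - l br + 4 / 5 * q) ^ 2) * he_eq
      _ ≤ (c br : ℝ) - 1 := h_pulls
      _ < 1 * (c br : ℝ) := by linarith

theorem sqrt_div_sub_one_le {e m : ℝ} (he : 0 ≤ e) (hm : 2 ≤ m) :
    √(e / (m - 1)) ≤ 3 / 2 * √(e / m) := by
  rw [Real.sqrt_le_left (by positivity), mul_pow, Real.sq_sqrt (by positivity),
    ← mul_div_assoc, div_le_div_iff₀ (by linarith) (by linarith)]
  nlinarith

theorem brHatE_eq_of_estimatesAccurate (he : 0 < e)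
    (hacc : EstimatesAccurate (ucbEChoice e) X e l T) {br : Fin nf}
    (hbr : ∀ k, k ≠ br → l br < l k)
    (hbudget : 36 / 25 * e * ∑ k, 1 / (l k - l br) ^ 2 ≤ (T : ℝ) - nf) :
    brHatE e X T = br := by
  by_contra hne
  set i := brHatE e X T with hi
  have h_gap : 0 < l i - l br := sub_pos.2 (hbr i hne)
  obtain ⟨h_two, h_bonus_br⟩ := two_le_cntK_and_bonus_lt_of_accurate he hacc hbr hbudget hne
  obtain ⟨hi_pulled, h_bonus_i⟩ := gap_add_bonus_le_of_two_le_cntK he.le hacc h_two i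
  have h_prev := sqrt_div_sub_one_le he.le (Nat.ofNat_le_cast (α := ℝ).2 h_two)
  have h_acc_i := abs_lt.1 (hacc T le_rfl i hi_pulled)
  have h_acc_br := abs_lt.1 (hacc T le_rfl br (two_pos.trans_le h_two))
  have h_min : muHat (history (ucbEChoice e) X T) i ≤ muHat (history (ucbEChoice e) X T) br := by
    rw [hi, brHatE, ucbEState_eq_history]
    exact apply_argminF_le _ br
  -- With `D` the gap of `i` and `q` the bonus of `br`, the two confidence radii add up to at most
  -- `D / 4 + 13 / 20 * q`, which is less than `D`.
  linarith

end UCBE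

section Measurability

variable {nf : ℕ}

theorem measurable_cntK_history {π : List (Fin nf × ℝ) → Fin nf} {t : ℕ}
    (h : ∀ i < t, Measurable fun X : ℕ → Fin nf → ℝ => π (history π X i)) (k : Fin nf) :
    Measurable fun X : ℕ → Fin nf → ℝ => cntK (history π X t) k := by
  induction t with
  | zero => exact measurable_const
  | succ t ih =>
    simp only [cntK_history_succ]
    exact (ih fun i hi => h i (hi.trans t.lt_succ_self)).add
      (.ite (h t t.lt_succ_self (measurableSet_singleton k)) measurable_const measurable_const)

theorem measurable_lossSum_history {π : List (Fin nf × ℝ) → Fin nf} {t : ℕ}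
    (h : ∀ i < t, Measurable fun X : ℕ → Fin nf → ℝ => π (history π X i)) (k : Fin nf) :
    Measurable fun X : ℕ → Fin nf → ℝ => lossSum (history π X t) k := by
  induction t with
  | zero => exact measurable_const
  | succ t ih =>
    simp only [lossSum_history_succ]
    exact (ih fun i hi => h i (hi.trans t.lt_succ_self)).add
      (.ite (h t t.lt_succ_self (measurableSet_singleton k))
        ((measurable_pi_apply k).comp (measurable_pi_apply t)) measurable_const)

/-- Measurability of a bandit policy, encoded as measurability of each of its choices as a function
of the loss trajectory, so that no σ-algebra on lists is needed. -/
def IsMeasurablePolicy (π : List (Fin nf × ℝ) → Fin nf) : Prop :=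
  ∀ t, Measurable fun X : ℕ → Fin nf → ℝ => π (history π X t)

theorem measurable_ucbEChoice_comp [NeZero nf] (e : ℝ) {Ω : Type*} [MeasurableSpace Ω]
    {h : Ω → List (Fin nf × ℝ)} (h_cnt : ∀ k, Measurable fun ω => cntK (h ω) k)
    (h_sum : ∀ k, Measurable fun ω => lossSum (h ω) k) :
    Measurable fun ω => ucbEChoice e (h ω) := by
  let firstUnpulled : (Fin nf → ℕ) → Fin nf := fun c =>
    if hu : (Finset.univ.filter fun k : Fin nf => c k = 0).Nonempty then
      (Finset.univ.filter fun k : Fin nf => c k = 0).min' hu else 0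
  have h_unpulled : MeasurableSet {ω | ∃ k, cntK (h ω) k = 0} := by
    rw [Set.ofPred_exists]
    exact .iUnion fun k => h_cnt k (measurableSet_singleton 0)
  have h_first : Measurable fun ω => firstUnpulled fun k => cntK (h ω) k :=
    (measurable_of_countable firstUnpulled).comp (measurable_pi_iff.2 h_cnt)
  have h_argmin : Measurable fun ω =>
      argminF fun k => muHat (h ω) k - √(e / cntK (h ω) k) := by
    have h_cast : ∀ k, Measurable fun ω => (cntK (h ω) k : ℝ) :=
      fun k => measurable_from_top.comp (h_cnt k)
    simp only [muHat_eq_lossSum_div]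
    exact measurable_argminF.comp <| measurable_pi_iff.2 fun k =>
      ((h_sum k).div (h_cast k)).sub ((h_cast k).const_div e).sqrt
  have h_choice : (fun ω => ucbEChoice e (h ω)) = fun ω =>
      if ∃ k, cntK (h ω) k = 0 then firstUnpulled fun k => cntK (h ω) k
      else argminF fun k => muHat (h ω) k - √(e / cntK (h ω) k) := by
    funext ω
    split_ifs with hω
    · simp [ucbEChoice, firstUnpulled, Finset.Nonempty, hω]
    · exact ucbEChoice_of_forall_pulled (not_exists.1 hω)
  rw [h_choice]
  exact .ite h_unpulled h_first h_argmin

theorem isMeasurablePolicy_ucbEChoice [NeZero nf] (e : ℝ) :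
    IsMeasurablePolicy (ucbEChoice e : List (Fin nf × ℝ) → Fin nf) := by
  intro t
  induction t using Nat.strong_induction_on with
  | _ t ih =>
    exact measurable_ucbEChoice_comp e (measurable_cntK_history ih) (measurable_lossSum_history ih)

end Measurability

section Trajectory

variable {E : Type} [Inhabited E] {n : ℕ}

theorem eOf_snoc_of_lt (y : Fin n → E) (x : E) {i : ℕ} (hi : i < n) :
    eOf (n + 1) (Fin.snoc y x) i = eOf n y i := by
  simp [eOf, hi, hi.trans n.lt_succ_self, Fin.snoc]

theorem eOf_snoc_last (y : Fin n → E) (x : E) : eOf (n + 1) (Fin.snoc y x) n = x := by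
  simp [eOf, Fin.snoc]

variable [MeasurableSpace E]

theorem measurable_eOf (n : ℕ) : Measurable (eOf n : (Fin n → E) → ℕ → E) := by
  refine measurable_pi_iff.2 fun t => ?_
  by_cases h : t < n
  · simpa only [eOf, h, dite_true] using measurable_pi_apply _
  · simpa only [eOf, h, dite_false] using measurable_const

end Trajectory

section Concentration

theorem lintegral_pi_snoc {E : Type*} [MeasurableSpace E] {n : ℕ}
    (μ : Fin (n + 1) → Measure E) [∀ i, SigmaFinite (μ i)] {f : (Fin (n + 1) → E) → ENNReal}
    (hf : Measurable f) :
    ∫⁻ ω, f ω ∂Measure.pi μ =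
      ∫⁻ y, ∫⁻ x, f (Fin.snoc y x) ∂μ (Fin.last n) ∂Measure.pi fun i => μ i.castSucc := by
  have hmp := (measurePreserving_piFinSuccAbove μ (Fin.last n)).symm
  have h_meas : Measurable fun p =>
      f ((MeasurableEquiv.piFinSuccAbove (fun _ => E) (Fin.last n)).symm p) :=
    hf.comp hmp.measurable
  rw [← hmp.lintegral_comp hf, lintegral_prod_symm _ h_meas.aemeasurable]
  simp only [← Fin.insertNth_last', Fin.succAbove_last]
  rfl

theorem lintegral_exp_mul_sub_le_one {Ω : Type*} [MeasurableSpace Ω] {μ : Measure Ω} {Y : Ω → ℝ}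
    {c : ℝ≥0} (hY : HasSubgaussianMGF Y c μ) (a : ℝ) :
    ∫⁻ ω, ENNReal.ofReal (Real.exp (a * Y ω - c * a ^ 2 / 2)) ∂μ ≤ 1 := by
  simp only [Real.exp_sub]
  rw [← ofReal_integral_eq_lintegral_ofReal ((hY.integrable_exp_mul a).div_const _)
    (ae_of_all _ fun ω => by positivity), ENNReal.ofReal_le_one, integral_div]
  exact (div_le_one (Real.exp_pos _)).2 (hY.mgf_le a)

variable {nf : ℕ} {π : List (Fin nf × ℝ) → Fin nf}

/-- The exponential supermartingale with exponent `a`, centring `m` and variance proxy `c` of the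
losses observed on arm `k`, stopped once the policy `π` has pulled this arm `s` times. -/
def expSupermartingale (π : List (Fin nf × ℝ) → Fin nf) (k : Fin nf) (s : ℕ) (c : ℝ≥0) (a m : ℝ)
    (X : ℕ → Fin nf → ℝ) (t : ℕ) : ℝ :=
  ∏ i ∈ Finset.range t, if π (history π X i) = k ∧ cntK (history π X i) k < s then
    Real.exp (a * (X i k - m) - c * a ^ 2 / 2) else 1

variable {k : Fin nf} {s : ℕ} {c : ℝ≥0} {a m : ℝ} {X : ℕ → Fin nf → ℝ}

theorem expSupermartingale_succ (t : ℕ) : expSupermartingale π k s c a m X (t + 1) =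
    expSupermartingale π k s c a m X t *
      if π (history π X t) = k ∧ cntK (history π X t) k < s then
        Real.exp (a * (X t k - m) - c * a ^ 2 / 2) else 1 :=
  Finset.prod_range_succ _ _

theorem expSupermartingale_nonneg (t : ℕ) : 0 ≤ expSupermartingale π k s c a m X t :=
  Finset.prod_nonneg fun i _ => by split_ifs <;> positivity

theorem measurable_expSupermartingale (hπ : IsMeasurablePolicy π) (t : ℕ) :
    Measurable fun X => expSupermartingale π k s c a m X t := by
  refine Finset.measurable_prod _ fun i _ => .ite ?_ ?_ measurable_const
  · exact (hπ i (measurableSet_singleton k)).inter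
      (measurable_cntK_history (fun j _ => hπ j) k measurableSet_Iio)
  · have : Measurable fun X : ℕ → Fin nf → ℝ => X i k :=
      (measurable_pi_apply k).comp (measurable_pi_apply i)
    fun_prop

theorem expSupermartingale_congr {Y : ℕ → Fin nf → ℝ} {t : ℕ} (h : ∀ i < t, X i = Y i) :
    expSupermartingale π k s c a m X t = expSupermartingale π k s c a m Y t := by
  refine Finset.prod_congr rfl fun i hi => ?_
  have hi := Finset.mem_range.1 hi
  rw [h i hi, history_congr fun j hj => h j (hj.trans hi)]

theorem expSupermartingale_eq_exp {t : ℕ} (ht : cntK (history π X t) k ≤ s) :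
    expSupermartingale π k s c a m X t =
      Real.exp (a * (lossSum (history π X t) k - cntK (history π X t) k * m) -
        cntK (history π X t) k * (c * a ^ 2 / 2)) := by
  induction t with
  | zero => simp [expSupermartingale, lossSum_history_zero, cntK_history_zero]
  | succ t ih =>
    have h_succ := cntK_history_succ π X t k
    rw [expSupermartingale_succ, ih (by lia), lossSum_history_succ, h_succ]
    by_cases h_pull : π (history π X t) = k
    · have h_lt : cntK (history π X t) k < s := by simp only [h_pull, if_true] at h_succ; lia
      simp only [h_pull, h_lt, and_self, if_true, ← Real.exp_add]
      push_cast
      ring_nf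
    · simp [h_pull]

theorem expSupermartingale_eq_of_cntK_eq {t n : ℕ} (htn : t ≤ n) (ht : cntK (history π X t) k = s) :
    expSupermartingale π k s c a m X n = expSupermartingale π k s c a m X t := by
  induction n, htn using Nat.le_induction with
  | base => rfl
  | succ n htn ih =>
    have h_stopped : s ≤ cntK (history π X n) k := ht ▸ monotone_cntK_history π X k htn
    rw [expSupermartingale_succ, if_neg (fun h => h.2.not_ge h_stopped), mul_one, ih]

theorem lintegral_expSupermartingale_le_one (hπ : IsMeasurablePolicy π) {n : ℕ}
    (μ : Fin n → Measure (Fin nf → ℝ)) [∀ i, IsProbabilityMeasure (μ i)]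
    (hμ : ∀ i, HasSubgaussianMGF (fun x => x k - m) c (μ i)) :
    ∫⁻ ω, ENNReal.ofReal (expSupermartingale π k s c a m (eOf n ω) n) ∂Measure.pi μ ≤ 1 := by
  induction n with
  | zero => simp [expSupermartingale]
  | succ n ih =>
    have h_meas : Measurable fun ω =>
        ENNReal.ofReal (expSupermartingale π k s c a m (eOf (n + 1) ω) (n + 1)) :=
      ((measurable_expSupermartingale hπ (n + 1)).comp (measurable_eOf (n + 1))).ennreal_ofReal
    rw [lintegral_pi_snoc μ h_meas]
    refine (lintegral_mono fun y => ?_).trans (ih _ fun i => hμ i.castSucc)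
    have h_past (x : Fin nf → ℝ) : ∀ i < n, eOf (n + 1) (Fin.snoc y x) i = eOf n y i :=
      fun i hi => eOf_snoc_of_lt y x hi
    simp only [expSupermartingale_succ, expSupermartingale_congr (h_past _),
      history_congr (h_past _), eOf_snoc_last, ENNReal.ofReal_mul (expSupermartingale_nonneg n)]
    rw [lintegral_const_mul' _ _ ENNReal.ofReal_ne_top]
    refine mul_le_of_le_one_right' ?_
    split_ifs
    · exact lintegral_exp_mul_sub_le_one (hμ (Fin.last n)) a
    · simp

variable {n : ℕ} {μ : Fin n → Measure (Fin nf → ℝ)} [∀ i, IsProbabilityMeasure (μ i)]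

theorem measure_exp_le_expSupermartingale_le (hπ : IsMeasurablePolicy π)
    (hμ : ∀ i, HasSubgaussianMGF (fun x => x k - m) c (μ i)) (y : ℝ) :
    Measure.pi μ {ω | Real.exp y ≤ expSupermartingale π k s c a m (eOf n ω) n} ≤
      ENNReal.ofReal (Real.exp (-y)) := by
  have h_markov := meas_ge_le_lintegral_div (μ := Measure.pi μ)
    ((measurable_expSupermartingale (k := k) (s := s) (c := c) (a := a) (m := m) hπ n).comp
      (measurable_eOf n)).ennreal_ofReal.aemeasurable
    (ENNReal.ofReal_pos.2 (Real.exp_pos y)).ne' ENNReal.ofReal_ne_top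
  simp only [Function.comp_apply,
    ENNReal.ofReal_le_ofReal_iff (expSupermartingale_nonneg n)] at h_markov
  refine h_markov.trans ?_
  rw [Real.exp_neg, ENNReal.ofReal_inv_of_pos (Real.exp_pos y), ← one_div]
  exact ENNReal.div_le_div_right (lintegral_expSupermartingale_le_one hπ μ hμ) _

-- The sign `σ` selects the tail; `a = σ ε / c` is the optimal exponent in Chernoff's bound.
theorem measure_exists_le_mul_muHat_sub_le (hπ : IsMeasurablePolicy π) (hc : 0 < c)
    (hμ : ∀ i, HasSubgaussianMGF (fun x => x k - m) c (μ i)) (hs : 0 < s) {ε : ℝ} (hε : 0 ≤ ε)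
    {σ : ℝ} (hσ : σ ^ 2 = 1) :
    Measure.pi μ {ω | ∃ t ≤ n, cntK (history π (eOf n ω) t) k = s ∧
        ε ≤ σ * (muHat (history π (eOf n ω) t) k - m)} ≤
      ENNReal.ofReal (Real.exp (-(s * ε ^ 2 / (2 * c)))) := by
  refine (measure_mono ?_).trans
    (measure_exp_le_expSupermartingale_le (s := s) (a := σ * ε / c) hπ hμ (s * ε ^ 2 / (2 * c)))
  rintro ω ⟨t, htn, ht, h_dev⟩
  have hs' : (0 : ℝ) < s := mod_cast hs
  have hc' : (0 : ℝ) < c := hc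
  rw [muHat_eq_lossSum_div, ht] at h_dev
  rw [Set.mem_ofPred_eq, expSupermartingale_eq_of_cntK_eq htn ht, expSupermartingale_eq_exp ht.le,
    ht, Real.exp_le_exp]
  set S := lossSum (history π (eOf n ω) t) k
  have h_scaled : s * ε ^ 2 / c ≤ σ * ε / c * (S - s * m) :=
    calc s * ε ^ 2 / c = s * ε / c * ε := by ring
      _ ≤ s * ε / c * (σ * (S / s - m)) := by gcongr
      _ = σ * ε / c * (S - s * m) := by field_simp
  have h_var : s * (c * (σ * ε / c) ^ 2 / 2) = s * ε ^ 2 / c / 2 := by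
    rw [div_pow, mul_pow, hσ]
    field_simp
  have h_half : s * ε ^ 2 / (2 * c) = s * ε ^ 2 / c / 2 := by
    field_simp
  linarith

theorem measure_exists_le_abs_muHat_sub_le (hπ : IsMeasurablePolicy π) (hc : 0 < c)
    (hμ : ∀ i, HasSubgaussianMGF (fun x => x k - m) c (μ i)) (hs : 0 < s) {ε : ℝ} (hε : 0 ≤ ε) :
    Measure.pi μ {ω | ∃ t ≤ n, cntK (history π (eOf n ω) t) k = s ∧
        ε ≤ |muHat (history π (eOf n ω) t) k - m|} ≤
      2 * ENNReal.ofReal (Real.exp (-(s * ε ^ 2 / (2 * c)))) := by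
  have h_tail {σ : ℝ} (hσ : σ ^ 2 = 1) := measure_exists_le_mul_muHat_sub_le hπ hc hμ hs hε hσ
  rw [two_mul]
  refine (measure_mono ?_).trans ((measure_union_le _ _).trans
    (add_le_add (h_tail (one_pow 2)) (h_tail neg_one_sq)))
  rintro ω ⟨t, htn, ht, h_dev⟩
  rcases le_abs.1 h_dev with h | h
  · exact .inl ⟨t, htn, ht, by rwa [one_mul]⟩
  · exact .inr ⟨t, htn, ht, by rwa [neg_one_mul]⟩

theorem measure_not_estimatesAccurate_le (hπ : IsMeasurablePolicy π) (hc : 0 < c)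
    {l : Fin nf → ℝ} (hμ : ∀ i k, HasSubgaussianMGF (fun x => x k - l k) c (μ i))
    {e : ℝ} (he : 0 ≤ e) :
    Measure.pi μ {ω | ¬ EstimatesAccurate π (eOf n ω) e l n} ≤
      ENNReal.ofReal (2 * n * nf * Real.exp (-(e / (50 * c)))) := by
  let deviation (p : Fin nf × ℕ) : Set (Fin n → Fin nf → ℝ) :=
    {ω | ∃ t ≤ n, cntK (history π (eOf n ω) t) p.1 = p.2 ∧
      √(e / p.2) / 5 ≤ |muHat (history π (eOf n ω) t) p.1 - l p.1|}
  have h_cover : {ω | ¬ EstimatesAccurate π (eOf n ω) e l n} ⊆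
      ⋃ p ∈ (Finset.univ : Finset (Fin nf)) ×ˢ Finset.Icc 1 n, deviation p := by
    intro ω hω
    simp only [EstimatesAccurate, Set.mem_ofPred_eq, not_forall, not_lt] at hω
    obtain ⟨t, htn, k, hk, h_dev⟩ := hω
    refine Set.mem_biUnion (x := (k, cntK (history π (eOf n ω) t) k)) ?_ ⟨t, htn, rfl, h_dev⟩
    simpa using ⟨hk, (cntK_history_le π (eOf n ω) t k).trans htn⟩
  have h_deviation : ∀ p ∈ (Finset.univ : Finset (Fin nf)) ×ˢ Finset.Icc 1 n,
      Measure.pi μ (deviation p) ≤ 2 * ENNReal.ofReal (Real.exp (-(e / (50 * c)))) := by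
    intro p hp
    have hs : 0 < p.2 := (Finset.mem_Icc.1 (Finset.mem_product.1 hp).2).1
    have h_exponent : p.2 * (√(e / p.2) / 5) ^ 2 / (2 * c) = e / (50 * c) := by
      rw [div_pow, Real.sq_sqrt (by positivity)]
      field_simp
      ring
    exact h_exponent ▸
      measure_exists_le_abs_muHat_sub_le hπ hc (fun i => hμ i p.1) hs (by positivity)
  calc Measure.pi μ {ω | ¬ EstimatesAccurate π (eOf n ω) e l n}
      ≤ ∑ p ∈ (Finset.univ : Finset (Fin nf)) ×ˢ Finset.Icc 1 n, Measure.pi μ (deviation p) :=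
        (measure_mono h_cover).trans (measure_biUnion_finset_le _ _)
    _ ≤ _ := Finset.sum_le_card_nsmul _ _ _ h_deviation
    _ = ENNReal.ofReal (2 * n * nf * Real.exp (-(e / (50 * c)))) := by
        rw [ENNReal.ofReal_mul (by positivity), ENNReal.ofReal_mul (by positivity),
          ENNReal.ofReal_mul (by positivity)]
        simp only [Finset.card_product, Finset.card_univ, Fintype.card_fin, Nat.card_Icc,
          Nat.add_sub_cancel, nsmul_eq_mul, ENNReal.ofReal_natCast, ENNReal.ofReal_ofNat]
        push_cast
        ring

end Concentration

section BestArm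

variable {nf : ℕ}

theorem sum_one_div_gap_sq_pos (hnf : 2 ≤ nf) {l : Fin nf → ℝ} {br : Fin nf}
    (hbr : ∀ k, k ≠ br → l br < l k) : 0 < ∑ k, 1 / (l k - l br) ^ 2 := by
  have : Nontrivial (Fin nf) := Fin.nontrivial_iff_two_le.2 hnf
  obtain ⟨j, hj⟩ := exists_ne br
  have h_gap : 0 < l j - l br := sub_pos.2 (hbr j hj)
  exact Finset.sum_pos' (fun k _ => by positivity) ⟨j, Finset.mem_univ j, by positivity⟩

theorem measure_brHatE_ne_le [NeZero nf] {T : ℕ} {l : Fin nf → ℝ} {br : Fin nf}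
    (hbr : ∀ k, k ≠ br → l br < l k) {μ : Fin T → Measure (Fin nf → ℝ)}
    [∀ t, IsProbabilityMeasure (μ t)] {c : ℝ≥0} (hc : 0 < c)
    (hμ : ∀ t k, HasSubgaussianMGF (fun x => x k - l k) c (μ t)) {e : ℝ} (he : 0 < e)
    (hbudget : 36 / 25 * e * ∑ k, 1 / (l k - l br) ^ 2 ≤ (T : ℝ) - nf) :
    Measure.pi μ {ω | brHatE e (eOf T ω) T ≠ br} ≤
      ENNReal.ofReal (2 * T * nf * Real.exp (-(e / (50 * c)))) := by
  refine (measure_mono fun ω (hω : brHatE e (eOf T ω) T ≠ br) => ?_).trans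
    (measure_not_estimatesAccurate_le (isMeasurablePolicy_ucbEChoice e) hc hμ he.le)
  exact fun hacc => hω (brHatE_eq_of_estimatesAccurate he hacc hbr hbudget)

theorem hasSubgaussianMGF_eval_sub_of_Icc {ι : Type*} [Countable ι] {ν : Measure (ι → ℝ)}
    [IsProbabilityMeasure ν] (hbd : ν {x | ∀ k, x k ∈ Set.Icc (0 : ℝ) 1} = 1) (k : ι) :
    HasSubgaussianMGF (fun x => x k - ∫ x, x k ∂ν) (1 / 4) ν := by
  have h_meas : MeasurableSet {x : ι → ℝ | ∀ k, x k ∈ Set.Icc (0 : ℝ) 1} := by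
    rw [Set.ofPred_forall]
    exact .iInter fun k => measurable_pi_apply k measurableSet_Icc
  have h_ae : ∀ᵐ x ∂ν, ∀ k, x k ∈ Set.Icc (0 : ℝ) 1 := (mem_ae_iff_prob_eq_one h_meas).2 hbd
  convert hasSubgaussianMGF_of_mem_Icc (measurable_pi_apply k).aemeasurable
    (h_ae.mono fun _ hx => hx k) using 1
  norm_num

theorem stmt10_general (nf Ta : ℕ) (hnf : 2 ≤ nf) (hTa : nf ≤ Ta) [NeZero nf]
    (lf : Fin nf → ℝ) (br : Fin nf) (hbr : ∀ k, k ≠ br → lf br < lf k)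
    (ν : Fin Ta → Measure (Fin nf → ℝ)) (hν : ∀ t, IsProbabilityMeasure (ν t))
    (c : ℝ≥0) (hc : 0 < c) (hsub : ∀ t k, HasSubgaussianMGF (fun x => x k - lf k) c (ν t)) :
    let H : ℝ := ∑ k, 1 / (lf k - lf br) ^ 2
    (∀ e : ℝ, 0 < e → e ≤ 25 / 36 * ((Ta : ℝ) - nf) / H →
      Measure.pi ν {ω | brHatE e (eOf Ta ω) Ta ≠ br} ≤
        ENNReal.ofReal (2 * Ta * nf * Real.exp (-(e / (50 * c))))) ∧
    (Measure.pi ν {ω | brHatE (25 / 36 * ((Ta : ℝ) - nf) / H) (eOf Ta ω) Ta ≠ br} ≤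
      ENNReal.ofReal (2 * Ta * nf * Real.exp (-(((Ta : ℝ) - nf) / (72 * c * H))))) := by
  intro H
  have hH : 0 < H := sum_one_div_gap_sq_pos hnf hbr
  have h_bound : ∀ e : ℝ, 0 < e → e ≤ 25 / 36 * ((Ta : ℝ) - nf) / H →
      Measure.pi ν {ω | brHatE e (eOf Ta ω) Ta ≠ br} ≤
        ENNReal.ofReal (2 * Ta * nf * Real.exp (-(e / (50 * c)))) := fun e he heH =>
    measure_brHatE_ne_le hbr hc hsub he (by linarith [(le_div_iff₀ hH).1 heH])
  refine ⟨h_bound, ?_⟩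
  obtain rfl | hlt := hTa.eq_or_lt
  -- When `Ta = nf` the parameter is `0`, outside the range of the first part.
  · have : (2 : ℝ) ≤ nf := mod_cast hnf
    refine prob_le_one.trans (ENNReal.one_le_ofReal.2 ?_)
    simp only [sub_self, zero_div, neg_zero, Real.exp_zero, mul_one]
    nlinarith
  · have h_pos : 0 < (Ta : ℝ) - nf := sub_pos.2 (mod_cast hlt)
    convert h_bound _ (by positivity) le_rfl using 5
    have : (0 : ℝ) < c := hc
    field_simp
    norm_num

end BestArm

/-- UCB-E best-arm identification, Audibert–Bubeck.  Run UCB-E for `Ta` pulls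
on `n_f` arms with `[0,1]`-valued noisy losses of means `lf k`, unique best arm `br`, gaps
`Δ_k = lf k − lf br` and hardness `H = ∑_k 1/Δ_k²`.  If `0 < e ≤ (25/36)(Ta − n_f)/H`, then the
probability that the resulting best-arm predictor is wrong is at most `2 Ta n_f exp(−2e/25)`;
in particular, for `e = (25/36)(Ta − n_f)/H` it is at most `2 Ta n_f exp(−(Ta − n_f)/(18H))`. -/
theorem stmt10 (nf Ta : ℕ) (hnf : 2 ≤ nf) (hTa : nf ≤ Ta) [NeZero nf]
    (lf : Fin nf → ℝ) (hlf : ∀ k, lf k ∈ Set.Icc (0 : ℝ) 1)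
    (br : Fin nf) (hbr : ∀ k, k ≠ br → lf br < lf k)
    (ν : Measure (Fin nf → ℝ)) (hν : IsProbabilityMeasure ν)
    (hmean : ∀ k, ∫ x, x k ∂ν = lf k)
    (hbd : ν {x | ∀ k, x k ∈ Set.Icc (0 : ℝ) 1} = 1) :
    let H : ℝ := ∑ k, 1 / (lf k - lf br) ^ 2
    (∀ e : ℝ, 0 < e → e ≤ 25 / 36 * ((Ta : ℝ) - nf) / H →
      (Measure.pi fun _ : Fin Ta => ν) {ω | brHatE e (eOf Ta ω) Ta ≠ br} ≤
        ENNReal.ofReal (2 * Ta * nf * Real.exp (-(2 * e) / 25))) ∧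
    ((Measure.pi fun _ : Fin Ta => ν)
        {ω | brHatE (25 / 36 * ((Ta : ℝ) - nf) / H) (eOf Ta ω) Ta ≠ br} ≤
      ENNReal.ofReal (2 * Ta * nf * Real.exp (-((Ta : ℝ) - nf) / (18 * H)))) := by
  simpa only [show (50 : ℝ) * (1 / 4 : ℝ≥0) = 25 / 2 by norm_num, mul_comm _ (2 : ℝ), neg_div,
    show (72 : ℝ) * (1 / 4 : ℝ≥0) = 18 by norm_num, div_div_eq_mul_div] using
    stmt10_general nf Ta hnf hTa lf br hbr (fun _ => ν) (fun _ => hν) (1 / 4) (by norm_num)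
      fun _ k => hmean k ▸ hasSubgaussianMGF_eval_sub_of_Icc hbd k

end
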